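/- For every bipartite density matrix ρ on ℂ^m⊗ℂ^n and every POVM {P_j} on ℂ^m, the quadratic Holevo quantity is bounded by the quadratic entropy of the reduced state: χ_Q(P, b) ≤ S_Q(ρ_a), where χ_Q(P, b) = S_Q(ρ_b) − ∑_{j : p_j ≠ 0} p_j S_Q(ρ_{b|j}) with p_j = Tr((P_j ⊗ I) ρ) and ρ_{b|j} = (1/p_j)·Tr_a((P_j ⊗ I) ρ). -/

import Mathlib

open scoped Kronecker
open Finset Matrix
open scoped ComplexOrder

noncomputable section

/-- A density matrix: positive semidefinite with unit trace. -/
def IsDensity {d : Type} [Fintype d] [DecidableEq d] (ρ : Matrix d d ℂ) : Prop :=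
  ρ.PosSemidef ∧ ρ.trace = 1

/-- An entropy family: a real number assigned to every square complex matrix of
every finite dimension. -/
def EntropyFamily : Type 1 :=
  ∀ (d : Type) [Fintype d] [DecidableEq d], Matrix d d ℂ → ℝ

/-- Concavity of an entropy family. -/
def EntropyFamily.Concave (S : EntropyFamily) : Prop :=
  ∀ (d : Type) [Fintype d] [DecidableEq d] (k : ℕ) (p : Fin k → ℝ)
    (ρ : Fin k → Matrix d d ℂ),
    (∀ j, 0 ≤ p j) → ∑ j, p j = 1 → (∀ j, IsDensity (ρ j)) →
    ∑ j, p j * S d (ρ j) ≤ S d (∑ j, (p j : ℂ) • ρ j)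

/-- The entropy family depends only on the nonzero spectrum: `S (A Aᴴ) = S (Aᴴ A)`. -/
def EntropyFamily.SpectrumDep (S : EntropyFamily) : Prop :=
  ∀ (d e : Type) [Fintype d] [DecidableEq d] [Fintype e] [DecidableEq e]
    (A : Matrix d e ℂ), S d (A * Aᴴ) = S e (Aᴴ * A)

/-- Partial trace over the first tensor factor. -/
def trA {da db : Type} [Fintype da] (ρ : Matrix (da × db) (da × db) ℂ) :
    Matrix db db ℂ :=
  Matrix.of fun j j' => ∑ i, ρ (i, j) (i, j')

/-- Partial trace over the second tensor factor. -/
def trB {da db : Type} [Fintype db] (ρ : Matrix (da × db) (da × db) ℂ) :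
    Matrix da da ℂ :=
  Matrix.of fun i i' => ∑ j, ρ (i, j) (i', j)

/-- A POVM: a finite family of positive semidefinite matrices summing to `1`. -/
def IsPOVM {d : Type} [Fintype d] [DecidableEq d] {k : ℕ}
    (P : Fin k → Matrix d d ℂ) : Prop :=
  (∀ j, (P j).PosSemidef) ∧ ∑ j, P j = 1

/-- Probability of POVM outcome `P` on the first factor: `Tr((P ⊗ I) ρ)`. -/
def prob {da db : Type} [Fintype da] [Fintype db] [DecidableEq da] [DecidableEq db]
    (P : Matrix da da ℂ) (ρ : Matrix (da × db) (da × db) ℂ) : ℝ :=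
  (((P ⊗ₖ (1 : Matrix db db ℂ)) * ρ).trace).re

/-- Conditional state on the second factor given POVM outcome `P`. -/
def condB {da db : Type} [Fintype da] [Fintype db] [DecidableEq da] [DecidableEq db]
    (P : Matrix da da ℂ) (ρ : Matrix (da × db) (da × db) ℂ) : Matrix db db ℂ :=
  (((prob P ρ)⁻¹ : ℝ) : ℂ) • trA ((P ⊗ₖ (1 : Matrix db db ℂ)) * ρ)

/-- The Holevo quantity `χ(P, b)`. -/
def holevoB (S : EntropyFamily) {da db : Type} [Fintype da] [DecidableEq da]
    [Fintype db] [DecidableEq db] {k : ℕ} (P : Fin k → Matrix da da ℂ)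
    (ρ : Matrix (da × db) (da × db) ℂ) : ℝ :=
  S db (trA ρ) -
    ∑ j ∈ univ.filter (fun j => prob (P j) ρ ≠ 0),
      prob (P j) ρ * S db (condB (P j) ρ)

/-- Eigenvalues of a Hermitian matrix (junk value `0` if not Hermitian). -/
def eigs {d : Type} [Fintype d] [DecidableEq d] (X : Matrix d d ℂ) : d → ℝ :=
  if h : X.IsHermitian then h.eigenvalues else 0

/-- von Neumann entropy `S(ρ) = ∑ᵢ (−λᵢ log λᵢ)`. -/
def vN {d : Type} [Fintype d] [DecidableEq d] (ρ : Matrix d d ℂ) : ℝ :=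
  ∑ i, Real.negMulLog (eigs ρ i)

/-- von Neumann entropy as an entropy family. -/
def vNF : EntropyFamily := fun d _ _ ρ => vN ρ

/-- Quadratic entropy `S_Q(ρ) = 1 − Re Tr(ρ²)`. -/
def SQ {d : Type} [Fintype d] (ρ : Matrix d d ℂ) : ℝ := 1 - ((ρ * ρ).trace).re

/-- Quadratic entropy as an entropy family. -/
def SQF : EntropyFamily := fun d _ _ ρ => SQ ρ

/-- The outer product `ψ ψᴴ`. -/
def outer {d : Type} (ψ : d → ℂ) : Matrix d d ℂ := Matrix.vecMulVec ψ (star ψ)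

/-- A unit vector. -/
def UnitVec {d : Type} [Fintype d] (ψ : d → ℂ) : Prop := ∑ i, ‖ψ i‖ ^ 2 = 1

/-- Kraus operators of a quantum channel: `∑ᵢ Kᵢᴴ Kᵢ = 1`. -/
def IsKraus {n r t : ℕ} (K : Fin t → Matrix (Fin r) (Fin n) ℂ) : Prop :=
  ∑ i, (K i)ᴴ * K i = 1

/-- Action of the quantum channel with Kraus operators `K`. -/
def channel {n r t : ℕ} (K : Fin t → Matrix (Fin r) (Fin n) ℂ)
    (ρ : Matrix (Fin n) (Fin n) ℂ) : Matrix (Fin r) (Fin r) ℂ :=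
  ∑ i, K i * ρ * (K i)ᴴ

/-- Conditional joint state after a POVM element with square root `Q` and
outcome probability `p`: `(1/p) (Q ⊗ I) ρ (Q ⊗ I)`. -/
def condJoint {da db : Type} [Fintype da] [Fintype db] [DecidableEq da]
    [DecidableEq db] (Q : Matrix da da ℂ) (p : ℝ)
    (ρ : Matrix (da × db) (da × db) ℂ) : Matrix (da × db) (da × db) ℂ :=
  ((p⁻¹ : ℝ) : ℂ) • ((Q ⊗ₖ (1 : Matrix db db ℂ)) * ρ * (Q ⊗ₖ (1 : Matrix db db ℂ)))

/-- Tsallis entropy with parameter `q`. -/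
def tsallis (q : ℝ) {d : Type} [Fintype d] [DecidableEq d]
    (ρ : Matrix d d ℂ) : ℝ :=
  ((∑ i, eigs ρ i ^ q) - 1) / (1 - q)

/-- Rényi entropy with parameter `q`. -/
def renyi (q : ℝ) {d : Type} [Fintype d] [DecidableEq d]
    (ρ : Matrix d d ℂ) : ℝ :=
  (1 / (1 - q)) * Real.log (∑ i, eigs ρ i ^ q)

/-- The squared Hilbert–Schmidt norm. -/
def hsSq {d e : Type*} [Fintype d] [Fintype e] (A : Matrix d e ℂ) : ℝ := ((Aᴴ * A).trace).re

section HilbertSchmidt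

variable {d e ι : Type*} [Fintype d] [Fintype e] [Fintype ι]

lemma hsSq_eq_sum (A : Matrix d e ℂ) : hsSq A = ∑ i, ∑ j, ‖A i j‖ ^ 2 := by
  rw [Finset.sum_comm]
  simp [hsSq, Matrix.trace, Matrix.mul_apply, Complex.sq_norm, Complex.normSq_apply]

lemma hsSq_nonneg (A : Matrix d e ℂ) : 0 ≤ hsSq A := by
  rw [hsSq_eq_sum]; positivity

lemma hsSq_eq_zero_iff {A : Matrix d e ℂ} : hsSq A = 0 ↔ A = 0 := by
  rw [hsSq_eq_sum]
  constructor
  · intro h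
    ext i j
    rw [Finset.sum_eq_zero_iff_of_nonneg (fun _ _ => by positivity)] at h
    have h2 := h i (Finset.mem_univ _)
    rw [Finset.sum_eq_zero_iff_of_nonneg (fun _ _ => by positivity)] at h2
    simpa using h2 j (Finset.mem_univ _)
  · rintro rfl
    simp

lemma hsSq_real_smul (r : ℝ) (A : Matrix d e ℂ) : hsSq ((r : ℂ) • A) = r ^ 2 * hsSq A := by
  simp only [hsSq_eq_sum, Matrix.smul_apply, norm_smul, mul_pow, Finset.mul_sum]
  simp

lemma trace_conjTranspose_mul_comm (A B : Matrix d e ℂ) :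
    (Bᴴ * A).trace = star (Aᴴ * B).trace := by
  rw [← Matrix.trace_conjTranspose]; simp

lemma hsSq_add (A B : Matrix d e ℂ) :
    hsSq (A + B) = hsSq A + hsSq B + 2 * ((Aᴴ * B).trace).re := by
  have h := trace_conjTranspose_mul_comm A B
  simp only [hsSq, Matrix.conjTranspose_add, Matrix.add_mul, Matrix.mul_add, Matrix.trace_add, h,
    Complex.add_re, Complex.star_def, Complex.conj_re]
  ring

lemma hsSq_sub (A B : Matrix d e ℂ) :
    hsSq (A - B) = hsSq A + hsSq B - 2 * ((Aᴴ * B).trace).re := by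
  have h := trace_conjTranspose_mul_comm A B
  simp only [hsSq, Matrix.conjTranspose_sub, Matrix.sub_mul, Matrix.mul_sub, Matrix.trace_sub, h,
    Complex.sub_re, Complex.star_def, Complex.conj_re]
  ring

lemma hsSq_mul_conjTranspose_le (A : Matrix d e ℂ) : hsSq (A * Aᴴ) ≤ hsSq A ^ 2 := by
  rw [hsSq_eq_sum, hsSq_eq_sum, sq (∑ i, _), Finset.sum_mul_sum]
  refine Finset.sum_le_sum fun i _ => Finset.sum_le_sum fun j _ => ?_
  have h1 : ‖(A * Aᴴ) i j‖ ≤ ∑ x, ‖A i x‖ * ‖A j x‖ := by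
    rw [Matrix.mul_apply]
    refine (norm_sum_le _ _).trans (le_of_eq ?_)
    simp
  calc ‖(A * Aᴴ) i j‖ ^ 2 ≤ (∑ x, ‖A i x‖ * ‖A j x‖) ^ 2 := by gcongr
    _ ≤ _ := Finset.sum_mul_sq_le_sq_mul_sq _ _ _

lemma re_trace_gram_mul_gram_nonneg (E G : Matrix d e ℂ) :
    0 ≤ (((E * Eᴴ)ᴴ * (G * Gᴴ)).trace).re := by
  have h : ((E * Eᴴ)ᴴ * (G * Gᴴ)).trace = ((Eᴴ * G)ᴴ * (Eᴴ * G)).trace := by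
    rw [← Matrix.mul_assoc, Matrix.trace_mul_comm _ Gᴴ]
    simp [Matrix.mul_assoc]
  rw [h]
  exact hsSq_nonneg _

lemma hsSq_gram_sub_gram_le_add (E G : Matrix d e ℂ) :
    hsSq (E * Eᴴ - G * Gᴴ) ≤ hsSq E ^ 2 + hsSq G ^ 2 := by
  rw [hsSq_sub]
  linarith [hsSq_mul_conjTranspose_le E, hsSq_mul_conjTranspose_le G,
    re_trace_gram_mul_gram_nonneg E G]

/-- For orthogonal `C` and `D`, a factor `2` better than submultiplicativity gives. -/
lemma hsSq_mul_conjTranspose_add_le (C D : Matrix d e ℂ) (h : ((Cᴴ * D).trace).re = 0) :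
    hsSq (C * Dᴴ + D * Cᴴ) ≤ 2 * (hsSq C * hsSq D) := by
  rcases (hsSq_nonneg C).eq_or_lt with hC | hC
  · rw [hsSq_eq_zero_iff.mp hC.symm]; simp [hsSq]
  rcases (hsSq_nonneg D).eq_or_lt with hD | hD
  · rw [hsSq_eq_zero_iff.mp hD.symm]; simp [hsSq]
  set c := Real.sqrt (hsSq C)
  set r := Real.sqrt (hsSq D)
  have hc : c ^ 2 = hsSq C := Real.sq_sqrt hC.le
  have hr : r ^ 2 = hsSq D := Real.sq_sqrt hD.le
  have horth : ((((r : ℂ) • C)ᴴ * ((c : ℂ) • D)).trace).re = 0 := by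
    simp [h, Matrix.trace_smul]
  have hdiff : ((r : ℂ) • C + (c : ℂ) • D) * ((r : ℂ) • C + (c : ℂ) • D)ᴴ
      - ((r : ℂ) • C - (c : ℂ) • D) * ((r : ℂ) • C - (c : ℂ) • D)ᴴ
      = ((2 * c * r : ℝ) : ℂ) • (C * Dᴴ + D * Cᴴ) := by
    simp only [Matrix.conjTranspose_add, Matrix.conjTranspose_sub, Matrix.conjTranspose_smul,
      Matrix.add_mul, Matrix.mul_add, Matrix.sub_mul, Matrix.mul_sub, Matrix.smul_mul,
      Matrix.mul_smul, Complex.star_def, Complex.conj_ofReal]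
    push_cast
    module
  have key := hsSq_gram_sub_gram_le_add ((r : ℂ) • C + (c : ℂ) • D) ((r : ℂ) • C - (c : ℂ) • D)
  rw [hdiff, hsSq_add, hsSq_sub, horth] at key
  simp only [hsSq_real_smul, mul_pow, hc, hr] at key
  have hpos : 0 < hsSq C * hsSq D := mul_pos hC hD
  refine le_of_mul_le_mul_left ?_ (mul_pos (by norm_num : (0 : ℝ) < 4) hpos)
  nlinarith [key]

lemma hsSq_gram_sub_gram_le (A B : Matrix d e ℂ) (hAB : hsSq A = hsSq B) :
    hsSq (A * Aᴴ - B * Bᴴ) ≤ 2 * (hsSq A ^ 2 - ‖(Aᴴ * B).trace‖ ^ 2) := by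
  obtain ⟨u, hu, hf⟩ : ∃ u : ℂ, star u * u = 1 ∧
      u * (Aᴴ * B).trace = (‖(Aᴴ * B).trace‖ : ℂ) := by
    by_cases hz : (Aᴴ * B).trace = 0
    · exact ⟨1, by simp, by simp [hz]⟩
    · have hn : (‖(Aᴴ * B).trace‖ : ℂ) ≠ 0 := by simpa using hz
      have hs : star (Aᴴ * B).trace * (Aᴴ * B).trace = (‖(Aᴴ * B).trace‖ : ℂ) ^ 2 :=
        Complex.conj_mul' _
      refine ⟨star (Aᴴ * B).trace / ‖(Aᴴ * B).trace‖, ?_, ?_⟩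
      · simp only [star_div₀, Complex.star_def, Complex.conj_ofReal] at hs ⊢
        field_simp
        simpa [mul_comm] using hs
      · rw [div_mul_eq_mul_div, hs]
        field_simp
  have hgram : (u • B) * (u • B)ᴴ = B * Bᴴ := by
    rw [Matrix.conjTranspose_smul, Matrix.smul_mul, Matrix.mul_smul, smul_smul, mul_comm, hu,
      one_smul]
  have hnorm : hsSq (u • B) = hsSq B := by
    simp only [hsSq, Matrix.conjTranspose_smul, Matrix.smul_mul, Matrix.mul_smul, smul_smul]
    rw [mul_comm u, hu, one_smul]
  have hin : (Aᴴ * (u • B)).trace = (‖(Aᴴ * B).trace‖ : ℂ) := by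
    rw [Matrix.mul_smul, Matrix.trace_smul, smul_eq_mul, hf]
  generalize ‖(Aᴴ * B).trace‖ = f at hin ⊢
  rw [← hgram]
  rw [← hnorm] at hAB
  generalize u • B = B' at hin hAB ⊢
  have horth : (((A + B')ᴴ * (A - B')).trace).re = 0 := by
    have h := trace_conjTranspose_mul_comm A B'
    have hA : ((Aᴴ * A).trace).re = ((B'ᴴ * B').trace).re := hAB
    simp only [Matrix.conjTranspose_add, Matrix.add_mul, Matrix.mul_sub, Matrix.trace_add,
      Matrix.trace_sub, h, hin, Complex.add_re, Complex.sub_re, Complex.star_def, Complex.conj_re]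
    linarith
  have key := hsSq_mul_conjTranspose_add_le _ _ horth
  have hdiff : (A + B') * (A - B')ᴴ + (A - B') * (A + B')ᴴ
      = ((2 : ℝ) : ℂ) • (A * Aᴴ - B' * B'ᴴ) := by
    simp only [Matrix.conjTranspose_add, Matrix.conjTranspose_sub,
      Matrix.add_mul, Matrix.mul_add, Matrix.sub_mul, Matrix.mul_sub]
    push_cast
    module
  rw [hdiff, hsSq_real_smul, hsSq_add, hsSq_sub A, hin, ← hAB, Complex.ofReal_re] at key
  nlinarith [key]

lemma hsSq_gram_div_add_le (A B : Matrix d e ℂ) :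
    hsSq B * (hsSq (A * Aᴴ) / hsSq A) + hsSq A * (hsSq (B * Bᴴ) / hsSq B)
      - 2 * (((A * Aᴴ)ᴴ * (B * Bᴴ)).trace).re
      ≤ 2 * (hsSq A * hsSq B) - 2 * ‖(Aᴴ * B).trace‖ ^ 2 := by
  rcases (hsSq_nonneg A).eq_or_lt with hA | hA
  · rw [hsSq_eq_zero_iff.mp hA.symm]; simp [hsSq]
  rcases (hsSq_nonneg B).eq_or_lt with hB | hB
  · rw [hsSq_eq_zero_iff.mp hB.symm]; simp [hsSq]
  set a := Real.sqrt (hsSq A)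
  set b := Real.sqrt (hsSq B)
  have ha : a ^ 2 = hsSq A := Real.sq_sqrt hA.le
  have hb : b ^ 2 = hsSq B := Real.sq_sqrt hB.le
  have key := hsSq_gram_sub_gram_le ((b : ℂ) • A) ((a : ℂ) • B)
    (by rw [hsSq_real_smul, hsSq_real_smul, ha, hb, mul_comm])
  have hgram : ∀ (x : ℝ) (Y : Matrix d e ℂ), ((x : ℂ) • Y) * ((x : ℂ) • Y)ᴴ
      = ((x ^ 2 : ℝ) : ℂ) • (Y * Yᴴ) := by
    intro x Y
    rw [Matrix.conjTranspose_smul, Matrix.smul_mul, Matrix.mul_smul, smul_smul, Complex.star_def,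
      Complex.conj_ofReal, Complex.ofReal_pow, sq]
  have hin : ‖(((b : ℂ) • A)ᴴ * ((a : ℂ) • B)).trace‖ ^ 2
      = hsSq A * hsSq B * ‖(Aᴴ * B).trace‖ ^ 2 := by
    simp [Matrix.trace_smul, mul_pow, ha, hb]; ring
  have hcross : ((((hsSq B : ℂ) • (A * Aᴴ))ᴴ * ((hsSq A : ℂ) • (B * Bᴴ))).trace).re
      = hsSq A * hsSq B * (((A * Aᴴ)ᴴ * (B * Bᴴ)).trace).re := by
    rw [Matrix.conjTranspose_smul, Matrix.smul_mul, Matrix.mul_smul, smul_smul,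
      Matrix.trace_smul, smul_eq_mul, Complex.star_def, Complex.conj_ofReal, ← Complex.ofReal_mul,
      Complex.re_ofReal_mul, mul_comm (hsSq B)]
  rw [hin, hgram, hgram, ha, hb, hsSq_sub, hcross, hsSq_real_smul, hsSq_real_smul, hsSq_real_smul,
    hb] at key
  refine le_of_mul_le_mul_left ?_ (mul_pos hA hB)
  have e : hsSq A * hsSq B * (hsSq B * (hsSq (A * Aᴴ) / hsSq A) + hsSq A * (hsSq (B * Bᴴ) / hsSq B)
      - 2 * (((A * Aᴴ)ᴴ * (B * Bᴴ)).trace).re) = hsSq B ^ 2 * hsSq (A * Aᴴ)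
      + hsSq A ^ 2 * hsSq (B * Bᴴ)
      - 2 * (hsSq A * hsSq B * (((A * Aᴴ)ᴴ * (B * Bᴴ)).trace).re) := by
    field_simp
  rw [e]
  nlinarith [key]

lemma hsSq_sum (X : ι → Matrix d e ℂ) :
    hsSq (∑ s, X s) = ∑ s, ∑ t, (((X s)ᴴ * X t).trace).re := by
  simp only [hsSq, Matrix.conjTranspose_sum, Matrix.sum_mul, Matrix.mul_sum, Matrix.trace_sum,
    Complex.re_sum]
  exact Finset.sum_comm

lemma sum_hsSq_gram_div_le (A : ι → Matrix d e ℂ) (hA : ∑ s, hsSq (A s) = 1) :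
    ∑ s, hsSq (A s * (A s)ᴴ) / hsSq (A s) - hsSq (∑ s, A s * (A s)ᴴ)
      ≤ 1 - ∑ s, ∑ t, ‖((A s)ᴴ * A t).trace‖ ^ 2 := by
  have h := Finset.sum_le_sum fun s (_ : s ∈ (Finset.univ : Finset ι)) =>
    Finset.sum_le_sum fun t (_ : t ∈ (Finset.univ : Finset ι)) => hsSq_gram_div_add_le (A s) (A t)
  simp only [Finset.sum_sub_distrib, Finset.sum_add_distrib, ← Finset.mul_sum, ← Finset.sum_mul,
    hA, ← hsSq_sum] at h
  linarith

lemma hsSq_sum_div_le (A : ι → Matrix d e ℂ) :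
    hsSq (∑ s, A s * (A s)ᴴ) / ∑ s, hsSq (A s) ≤ ∑ s, hsSq (A s * (A s)ᴴ) / hsSq (A s) := by
  have hnn : 0 ≤ ∑ s, hsSq (A s * (A s)ᴴ) / hsSq (A s) :=
    Finset.sum_nonneg fun s _ => div_nonneg (hsSq_nonneg _) (hsSq_nonneg _)
  refine div_le_of_le_mul₀ (Finset.sum_nonneg fun s _ => hsSq_nonneg _) hnn ?_
  have hentry : ∀ x y, ‖(∑ s, A s * (A s)ᴴ) x y‖ ^ 2
      ≤ (∑ s, ‖(A s * (A s)ᴴ) x y‖ ^ 2 / hsSq (A s)) * ∑ s, hsSq (A s) := by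
    intro x y
    rw [Matrix.sum_apply]
    refine (pow_le_pow_left₀ (norm_nonneg _) (norm_sum_le _ _) 2).trans ?_
    refine Finset.sum_sq_le_sum_mul_sum_of_sq_le_mul _
      (fun s _ => div_nonneg (sq_nonneg _) (hsSq_nonneg _)) (fun s _ => hsSq_nonneg _) fun s _ => ?_
    by_cases hz : hsSq (A s) = 0
    · simp [hsSq_eq_zero_iff.mp hz]
    · rw [div_mul_cancel₀ _ hz]
  rw [hsSq_eq_sum]
  refine (Finset.sum_le_sum fun x _ => Finset.sum_le_sum fun y _ => hentry x y).trans (le_of_eq ?_)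
  simp only [← Finset.sum_mul]
  congr 1
  simp only [hsSq_eq_sum (A _ * (A _)ᴴ), Finset.sum_div]
  rw [Finset.sum_comm_cycle]

lemma hsSq_isometry_conj [DecidableEq d] (W : Matrix ι d ℂ) (hW : Wᴴ * W = 1) (X : Matrix d d ℂ) :
    hsSq (W * X * Wᴴ) = hsSq X := by
  have h : (W * X * Wᴴ)ᴴ * (W * X * Wᴴ) = W * (Xᴴ * X * Wᴴ) := by
    simp only [Matrix.conjTranspose_mul, Matrix.conjTranspose_conjTranspose, Matrix.mul_assoc]
    rw [← Matrix.mul_assoc Wᴴ W, hW, Matrix.one_mul]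
  rw [hsSq, h, Matrix.trace_mul_comm, Matrix.mul_assoc, hW, Matrix.mul_one, hsSq]

end HilbertSchmidt

open scoped MatrixOrder in
lemma Matrix.PosSemidef.exists_eq_conjTranspose_mul_self {d : Type*} [Fintype d] [DecidableEq d]
    {X : Matrix d d ℂ} (hX : X.PosSemidef) : ∃ Y : Matrix d d ℂ, X = Yᴴ * Y :=
  CStarAlgebra.nonneg_iff_eq_star_mul_self.mp hX.nonneg

lemma hsSq_eq_of_isHermitian {d : Type*} [Fintype d] {X : Matrix d d ℂ} (hX : X.IsHermitian) :
    ((X * X).trace).re = hsSq X := by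
  rw [hsSq, hX.eq]

lemma trA_sum {da db : Type} {ι : Type*} [Fintype da] [Fintype ι]
    (X : ι → Matrix (da × db) (da × db) ℂ) :
    trA (∑ s, X s) = ∑ s, trA (X s) := by
  ext b b'
  simp only [trA, Matrix.of_apply, Matrix.sum_apply]
  exact Finset.sum_comm

lemma sum_kronecker_one {da db ι : Type*} [DecidableEq db] [Fintype ι]
    (X : ι → Matrix da da ℂ) :
    (∑ s, X s) ⊗ₖ (1 : Matrix db db ℂ) = ∑ s, X s ⊗ₖ (1 : Matrix db db ℂ) := by
  ext x y
  simp [Matrix.kroneckerMap_apply, Matrix.sum_apply, Finset.sum_mul]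

/-- The vector obtained by contracting the first tensor factor of `M` against `w`,
as a matrix from the purifying system to the second factor. -/
def contractFst {da db dc : Type*} [Fintype da] (w : da → ℂ) (M : Matrix (da × db) dc ℂ) :
    Matrix db dc ℂ :=
  Matrix.of fun b c => ∑ a, w a * M (a, b) c

section Bipartite

variable {da db dc : Type} [Fintype da] [Fintype db] [Fintype dc]

lemma trA_kronecker_one_mul [DecidableEq db] (Q : Matrix da da ℂ) (M : Matrix (da × db) dc ℂ) :
    trA (((Qᴴ * Q) ⊗ₖ (1 : Matrix db db ℂ)) * (M * Mᴴ))
      = ∑ r, contractFst (Q r) M * (contractFst (Q r) M)ᴴ := by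
  ext b b'
  have hL : trA (((Qᴴ * Q) ⊗ₖ (1 : Matrix db db ℂ)) * (M * Mᴴ)) b b'
      = ∑ a, ∑ a', ∑ r, ∑ c, star (Q r a) * Q r a' * (M (a', b) c * star (M (a, b') c)) := by
    simp only [trA, Matrix.of_apply, Matrix.mul_apply (M := (Qᴴ * Q) ⊗ₖ (1 : Matrix db db ℂ)),
      Fintype.sum_prod_type, Matrix.kroneckerMap_apply, Matrix.one_apply, mul_ite, mul_one,
      mul_zero, ite_mul, zero_mul, Finset.sum_ite_eq, Finset.mem_univ, if_true]
    simp only [Matrix.mul_apply, Matrix.conjTranspose_apply, Finset.sum_mul_sum]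
  rw [hL, Finset.sum_comm_cycle, Matrix.sum_apply]
  refine Finset.sum_congr rfl fun r _ => ?_
  rw [Finset.sum_comm_cycle, Matrix.mul_apply]
  refine Finset.sum_congr rfl fun c _ => ?_
  simp only [contractFst, Matrix.conjTranspose_apply, Matrix.of_apply, star_sum, star_mul',
    Finset.sum_mul_sum]
  rw [Finset.sum_comm]
  refine Finset.sum_congr rfl fun _ _ => Finset.sum_congr rfl fun _ _ => ?_
  ring

lemma trace_trA (X : Matrix (da × db) (da × db) ℂ) : (trA X).trace = X.trace := by
  simp only [trA, Matrix.trace, Matrix.diag_apply, Matrix.of_apply, Fintype.sum_prod_type]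
  exact Finset.sum_comm

lemma trace_contractFst (w v : da → ℂ) (M : Matrix (da × db) dc ℂ) :
    ((contractFst w M)ᴴ * contractFst v M).trace
      = ∑ a', (∑ a, v a * trB (M * Mᴴ) a a') * star (w a') := by
  have hR : ∑ a', (∑ a, v a * trB (M * Mᴴ) a a') * star (w a')
      = ∑ a', ∑ a, ∑ b, ∑ c, star (w a') * star (M (a', b) c) * (v a * M (a, b) c) := by
    simp only [trB, Matrix.of_apply, Matrix.mul_apply, Matrix.conjTranspose_apply, Finset.sum_mul,
      Finset.mul_sum]
    refine Finset.sum_congr rfl fun _ _ => Finset.sum_congr rfl fun _ _ =>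
      Finset.sum_congr rfl fun _ _ => Finset.sum_congr rfl fun _ _ => ?_
    ring
  rw [hR, Finset.sum_comm_cycle, Matrix.trace, Finset.sum_congr rfl fun _ _ => Finset.sum_comm_cycle,
    Finset.sum_comm]
  simp only [Matrix.diag_apply, Matrix.mul_apply, Matrix.conjTranspose_apply, contractFst,
    Matrix.of_apply, star_sum, star_mul', Finset.sum_mul_sum]

end Bipartite

/-- the quadratic Holevo quantity is bounded by the quadratic
entropy of the reduced state. -/
theorem quadratic_holevo_le_entropy
    (m n k : ℕ) (ρ : Matrix (Fin m × Fin n) (Fin m × Fin n) ℂ) (hρ : IsDensity ρ)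
    (P : Fin k → Matrix (Fin m) (Fin m) ℂ) (hP : IsPOVM P) :
    holevoB SQF P ρ ≤ SQ (trB ρ) := by
  obtain ⟨N, hN⟩ := hρ.1.exists_eq_conjTranspose_mul_self
  obtain ⟨M, rfl⟩ : ∃ M : Matrix (Fin m × Fin n) (Fin m × Fin n) ℂ, ρ = M * Mᴴ :=
    ⟨Nᴴ, by rw [hN, Matrix.conjTranspose_conjTranspose]⟩
  choose Q hQ using fun j => (hP.1 j).exists_eq_conjTranspose_mul_self
  set A : Fin k × Fin m → Matrix (Fin n) (Fin m × Fin n) ℂ :=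
    fun s => contractFst (Q s.1 s.2) M with hAdef
  set σ : Fin k → Matrix (Fin n) (Fin n) ℂ :=
    fun j => trA ((P j ⊗ₖ (1 : Matrix (Fin n) (Fin n) ℂ)) * (M * Mᴴ)) with hσdef
  have hσ : ∀ j, σ j = ∑ r, A (j, r) * (A (j, r))ᴴ := fun j => by
    simp only [hσdef, hAdef, hQ j]
    exact trA_kronecker_one_mul (Q j) M
  have hσherm : ∀ j, (σ j).IsHermitian := fun j => by
    rw [hσ, Matrix.IsHermitian, Matrix.conjTranspose_sum]
    simp
  have hprob : ∀ j, prob (P j) (M * Mᴴ) = ∑ r, hsSq (A (j, r)) := fun j => by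
    have h : prob (P j) (M * Mᴴ) = ((σ j).trace).re := by
      rw [prob, hσdef, trace_trA]
    rw [h, hσ, Matrix.trace_sum, Complex.re_sum]
    refine Finset.sum_congr rfl fun r _ => ?_
    rw [Matrix.trace_mul_comm, hsSq]
  have hsumσ : ∑ s, A s * (A s)ᴴ = trA (M * Mᴴ) := by
    rw [Fintype.sum_prod_type]
    simp only [← hσ, hσdef]
    rw [← trA_sum, ← Matrix.sum_mul, ← sum_kronecker_one, hP.2, Matrix.one_kronecker_one,
      Matrix.one_mul]
  have hsumA : ∑ s, hsSq (A s) = 1 := by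
    have h : ∑ s, hsSq (A s) = ((∑ s, A s * (A s)ᴴ).trace).re := by
      rw [Matrix.trace_sum, Complex.re_sum]
      refine Finset.sum_congr rfl fun s _ => ?_
      rw [Matrix.trace_mul_comm, hsSq]
    rw [h, hsumσ, trace_trA, hρ.2, Complex.one_re]
  have hgram : ∑ s, ∑ t, ‖((A s)ᴴ * A t).trace‖ ^ 2 = hsSq (trB (M * Mᴴ)) := by
    set W : Matrix (Fin k × Fin m) (Fin m) ℂ := Matrix.of fun s a => Q s.1 s.2 a with hWdef
    have hW : Wᴴ * W = 1 := by
      rw [← hP.2]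
      ext a a'
      simp [hWdef, hQ, Matrix.mul_apply, Matrix.sum_apply, Fintype.sum_prod_type]
    rw [← hsSq_isometry_conj W hW, hsSq_eq_sum, Finset.sum_comm]
    refine Finset.sum_congr rfl fun t _ => Finset.sum_congr rfl fun s _ => ?_
    rw [hAdef, trace_contractFst]
    simp [hWdef, Matrix.mul_apply]
  have hentropy : holevoB SQF P (M * Mᴴ)
      = ∑ j, hsSq (σ j) / (∑ r, hsSq (A (j, r))) - hsSq (trA (M * Mᴴ)) := by
    have hterm : ∀ j, prob (P j) (M * Mᴴ) * SQ (condB (P j) (M * Mᴴ))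
        = prob (P j) (M * Mᴴ) - hsSq (σ j) / prob (P j) (M * Mᴴ) := fun j => by
      have hc : condB (P j) (M * Mᴴ) = (((prob (P j) (M * Mᴴ))⁻¹ : ℝ) : ℂ) • σ j := rfl
      have hH : ((((prob (P j) (M * Mᴴ))⁻¹ : ℝ) : ℂ) • σ j).IsHermitian := by
        rw [Matrix.IsHermitian, Matrix.conjTranspose_smul, (hσherm j).eq, Complex.star_def,
          Complex.conj_ofReal]
      rw [hc, SQ, hsSq_eq_of_isHermitian hH, hsSq_real_smul]
      by_cases hz : prob (P j) (M * Mᴴ) = 0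
      · simp [hz]
      · field_simp
    have hH : (trA (M * Mᴴ)).IsHermitian := by
      rw [← hsumσ, Matrix.IsHermitian, Matrix.conjTranspose_sum]
      simp
    have hp : ∑ j, ∑ r, hsSq (A (j, r)) = 1 := by
      rw [← hsumA, Fintype.sum_prod_type]
    simp only [holevoB, SQF, hterm]
    rw [Finset.sum_filter_of_ne (p := fun j => prob (P j) (M * Mᴴ) ≠ 0)
      (fun j _ h hz => h (by simp [hz])), SQ, hsSq_eq_of_isHermitian hH,
      Finset.sum_sub_distrib]
    simp only [hprob, hp]
    ring
  have hH : (trB (M * Mᴴ)).IsHermitian := by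
    ext a a'
    simp [trB, Matrix.mul_apply, mul_comm]
  have hconv : ∑ j, hsSq (σ j) / (∑ r, hsSq (A (j, r)))
      ≤ ∑ s, hsSq (A s * (A s)ᴴ) / hsSq (A s) := by
    rw [Fintype.sum_prod_type]
    refine Finset.sum_le_sum fun j _ => ?_
    rw [hσ]
    exact hsSq_sum_div_le fun r => A (j, r)
  have hmain := sum_hsSq_gram_div_le A hsumA
  rw [hgram, hsumσ] at hmain
  rw [hentropy, SQ, hsSq_eq_of_isHermitian hH]
  linarith
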